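/- arXiv:2012.06273 — 4 statements merged into one kernel-verified Lean document; each statement's English description precedes it below -/
import Mathlib

section
/- Let n, m be positive integers, let f : ℝⁿ × ℝᵐ → ℝⁿ be continuously differentiable with f(0,0) = 0, let A ∈ ℝ^{n×n} and B ∈ ℝ^{n×m} be the partial Jacobian matrices of f with respect to x and u at (0,0), and let K ∈ ℝ^{m×n} and T > 0. Fix θ ∈ {0,1} and set c₀ := [1 + T(‖BK‖_∞ + ‖K‖_∞)]·e^{T(‖A‖_∞ + 1)} and c₁ := e^{T(‖A‖_∞ + 1)}. Then there exists d > 0 such that for every x̄ ∈ ℝⁿ with ‖x̄‖_∞ < d, setting ū := (1−θ)Kx̄, every continuous φ : [0,T] → ℝⁿ satisfying φ(t) = x̄ + ∫₀ᵗ f(φ(s), ū) ds for all t ∈ [0,T] obeys ‖φ(t)‖_∞ ≤ c₀‖x̄‖_∞ for all t ∈ [0,T) if θ = 0, and ‖φ(t)‖_∞ ≤ c₁‖x̄‖_∞ for all t ∈ [0,T) if θ = 1. -/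
attribute [local instance] Matrix.linftyOpNormedAddCommGroup

/-!
Differentiability at the origin gives, for `x` and `u` small,
`‖f x u‖ ≤ (‖A‖ + ε)‖x‖ + ‖B u‖ + ε‖u‖`. With `u = K x̄` this is a Grönwall hypothesis with rate
`‖A‖ + ε` and forcing term `(‖B K‖ + ε‖K‖)‖x̄‖`, valid as long as the trajectory stays in a ball of
radius `ρ`. The resulting bound is linear in `‖x̄‖`, so for small `x̄` it is below `ρ` and the
trajectory never leaves the ball. The constants `c₀` and `c₁` are the case `ε = 1`, the latter with
`K = 0`.
-/

open Set Topology MeasureTheory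

theorem gronwallBound_le_mul_exp {K ε : ℝ} (hK : 0 ≤ K) (hε : 0 ≤ ε) (δ x : ℝ) :
    gronwallBound δ K ε x ≤ (δ + ε * x) * Real.exp (K * x) := by
  rcases hK.eq_or_lt with rfl | hK
  · simp [gronwallBound_K0]
  have exp_sub_one_le : Real.exp (K * x) - 1 ≤ K * x * Real.exp (K * x) := by
    have h : (1 - K * x) * Real.exp (K * x) ≤ Real.exp (-(K * x)) * Real.exp (K * x) := by
      gcongr
      exact Real.one_sub_le_exp_neg _
    rw [← Real.exp_add, neg_add_cancel, Real.exp_zero] at h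
    linarith
  calc gronwallBound δ K ε x = δ * Real.exp (K * x) + ε / K * (Real.exp (K * x) - 1) := by
        rw [gronwallBound_of_K_ne_0 hK.ne']
    _ ≤ δ * Real.exp (K * x) + ε / K * (K * x * Real.exp (K * x)) := by gcongr
    _ = (δ + ε * x) * Real.exp (K * x) := by field

section NormedSpace

variable {E F G : Type*} [NormedAddCommGroup E] [NormedSpace ℝ E]
  [NormedAddCommGroup F] [NormedSpace ℝ F] [NormedAddCommGroup G] [NormedSpace ℝ G]

theorem norm_le_gronwallBound_of_norm_deriv_right_le_of_norm_lt {φ φ' : ℝ → E}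
    {δ K ε ρ a b : ℝ} (hK : 0 ≤ K) (hε : 0 ≤ ε) (hφ : ContinuousOn φ (Icc a b))
    (hφ' : ∀ t ∈ Ico a b, HasDerivWithinAt φ (φ' t) (Ici t) t) (ha : ‖φ a‖ ≤ δ)
    (bound : ∀ t ∈ Ico a b, ‖φ t‖ < ρ → ‖φ' t‖ ≤ K * ‖φ t‖ + ε)
    (hρ : gronwallBound δ K ε (b - a) < ρ) :
    ∀ t ∈ Icc a b, ‖φ t‖ ≤ gronwallBound δ K ε (t - a) := by
  suffices norm_lt : ∀ t ∈ Icc a b, ‖φ t‖ < ρ from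
    norm_le_gronwallBound_of_norm_deriv_right_le hφ hφ' ha fun t ht =>
      bound t ht (norm_lt t (Ico_subset_Icc_self ht))
  by_contra! ⟨t₁, ht₁, hρt₁⟩
  have exits_compact : IsCompact (Icc a b ∩ (fun t => ‖φ t‖) ⁻¹' Ici ρ) :=
    isCompact_Icc.of_isClosed_subset
      (hφ.norm.preimage_isClosed_of_isClosed isClosed_Icc isClosed_Ici) inter_subset_left
  obtain ⟨τ, ⟨hτ, hρτ⟩, hτ_min⟩ := exits_compact.exists_isLeast ⟨t₁, ht₁, hρt₁⟩
  have norm_lt_before : ∀ t ∈ Ico a τ, ‖φ t‖ < ρ := fun t ht =>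
    not_le.1 fun h => ht.2.not_ge (hτ_min ⟨⟨ht.1, ht.2.le.trans hτ.2⟩, h⟩)
  have Ico_subset : Ico a τ ⊆ Ico a b := Ico_subset_Ico_right hτ.2
  refine lt_irrefl ρ ?_
  calc ρ ≤ ‖φ τ‖ := hρτ
    _ ≤ gronwallBound δ K ε (τ - a) :=
      norm_le_gronwallBound_of_norm_deriv_right_le (hφ.mono (Icc_subset_Icc_right hτ.2))
        (fun t ht => hφ' t (Ico_subset ht)) ha
        (fun t ht => bound t (Ico_subset ht) (norm_lt_before t ht)) τ (right_mem_Icc.2 hτ.1)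
    _ ≤ gronwallBound δ K ε (b - a) :=
      gronwallBound_mono ((norm_nonneg _).trans ha) hε hK (by gcongr; exact hτ.2)
    _ < ρ := hρ

theorem hasDerivWithinAt_Ici_of_eq_add_integral [CompleteSpace E] {φ g : ℝ → E} {x₀ : E}
    {a b : ℝ} (hg : ContinuousOn g (Icc a b))
    (hφ : ∀ t ∈ Icc a b, φ t = x₀ + ∫ s in a..t, g s) {t : ℝ} (ht : t ∈ Ico a b) :
    HasDerivWithinAt φ (g t) (Ici t) t := by
  have htIcc : t ∈ Icc a b := Ico_subset_Icc_self ht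
  have : Fact (t ∈ Icc a b) := ⟨htIcc⟩
  have hint : IntervalIntegrable g volume a t :=
    (hg.mono (Icc_subset_Icc_right ht.2.le)).intervalIntegrable_of_Icc ht.1
  have hderiv : HasDerivWithinAt (fun r => x₀ + ∫ s in a..r, g s) (g t) (Icc a b) t :=
    (intervalIntegral.integral_hasDerivWithinAt_right hint
      (hg.stronglyMeasurableAtFilter_nhdsWithin measurableSet_Icc t) (hg t htIcc)).const_add x₀
  exact (hderiv.congr hφ (hφ t htIcc)).mono_of_mem_nhdsWithin (Icc_mem_nhdsGE_of_mem ht)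

theorem hasFDerivAt_uncurry_coprod_fderiv {f : E → F → G} {x : E} {y : F}
    (hf : DifferentiableAt ℝ (Function.uncurry f) (x, y)) :
    HasFDerivAt (Function.uncurry f)
      ((fderiv ℝ (fun x' => f x' y) x).coprod (fderiv ℝ (fun y' => f x y') y)) (x, y) := by
  set D := fderiv ℝ (Function.uncurry f) (x, y)
  have hx : HasFDerivAt (fun x' => f x' y) (D ∘L .inl ℝ E F) x :=
    HasFDerivAt.comp (f := (·, y)) x hf.hasFDerivAt (hasFDerivAt_prodMk_left x y)
  have hy : HasFDerivAt (fun y' => f x y') (D ∘L .inr ℝ E F) y :=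
    HasFDerivAt.comp (f := (x, ·)) y hf.hasFDerivAt (hasFDerivAt_prodMk_right x y)
  rw [hx.fderiv, hy.fderiv, ← ContinuousLinearMap.comp_coprod,
    ContinuousLinearMap.coprod_inl_inr, ContinuousLinearMap.comp_id]
  exact hf.hasFDerivAt

theorem exists_forall_norm_lt_norm_le_of_hasFDerivAt_coprod {f : E → F → G}
    {A : E →L[ℝ] G} {B : F →L[ℝ] G}
    (hf : HasFDerivAt (Function.uncurry f) (A.coprod B) (0, 0)) (hf0 : f 0 0 = 0)
    {ε : ℝ} (hε : 0 < ε) :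
    ∃ ρ > 0, ∀ x u, ‖x‖ < ρ → ‖u‖ < ρ →
      ‖f x u‖ ≤ (‖A‖ + ε) * ‖x‖ + (‖B u‖ + ε * ‖u‖) := by
  obtain ⟨ρ, hρ, remainder_le⟩ := Metric.eventually_nhds_iff.1 (hf.isLittleO.def hε)
  refine ⟨ρ, hρ, fun x u hx hu => ?_⟩
  have hxu : dist (x, u) (0, 0) < ρ := by simpa [Prod.dist_eq] using ⟨hx, hu⟩
  have hrem : ‖f x u - (A x + B u)‖ ≤ ε * ‖(x, u)‖ := by
    simpa [hf0] using remainder_le hxu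
  have hnorm : ‖(x, u)‖ ≤ ‖x‖ + ‖u‖ := max_le_add_of_nonneg (norm_nonneg x) (norm_nonneg u)
  calc ‖f x u‖ ≤ ‖A x + B u‖ + ‖f x u - (A x + B u)‖ := norm_le_norm_add_norm_sub' _ _
    _ ≤ ‖A‖ * ‖x‖ + ‖B u‖ + ε * (‖x‖ + ‖u‖) := by
      gcongr
      · exact (norm_add_le _ _).trans (by gcongr; exact A.le_opNorm x)
      · exact hrem.trans (by gcongr)
    _ = (‖A‖ + ε) * ‖x‖ + (‖B u‖ + ε * ‖u‖) := by ring

theorem stmt0_general [CompleteSpace E] {f : E → F → E} {A : E →L[ℝ] E} {B : F →L[ℝ] E}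
    (hf : HasFDerivAt (Function.uncurry f) (A.coprod B) (0, 0)) (hf0 : f 0 0 = 0)
    (hfc : ∀ u, Continuous fun x => f x u) (K : E →L[ℝ] F) (T : ℝ) {ε : ℝ} (hε : 0 < ε) :
    ∀ᶠ xBar in 𝓝 (0 : E), ∀ φ : ℝ → E, ContinuousOn φ (Icc 0 T) →
      (∀ t ∈ Icc 0 T, φ t = xBar + ∫ s in (0 : ℝ)..t, f (φ s) (K xBar)) →
      ∀ t ∈ Icc 0 T,
        ‖φ t‖ ≤ (1 + T * (‖B ∘L K‖ + ε * ‖K‖)) * Real.exp (T * (‖A‖ + ε)) * ‖xBar‖ := by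
  obtain ⟨ρ, hρ, norm_f_le⟩ := exists_forall_norm_lt_norm_le_of_hasFDerivAt_coprod hf hf0 hε
  set L := ‖A‖ + ε
  set M := ‖B ∘L K‖ + ε * ‖K‖
  have gronwall_le (x : E) :
      gronwallBound ‖x‖ L (M * ‖x‖) T ≤ (1 + T * M) * Real.exp (T * L) * ‖x‖ :=
    (gronwallBound_le_mul_exp (by positivity) (by positivity) _ _).trans_eq (by ring_nf)
  have bound_lt : ∀ᶠ x in 𝓝 (0 : E), (1 + T * M) * Real.exp (T * L) * ‖x‖ < ρ :=
    (by fun_prop : Continuous _).tendsto' 0 0 (by simp) |>.eventually_lt_const hρ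
  have input_lt : ∀ᶠ x in 𝓝 (0 : E), ‖K x‖ < ρ :=
    (by fun_prop : Continuous _).tendsto' 0 0 (by simp) |>.eventually_lt_const hρ
  filter_upwards [bound_lt, input_lt] with x hx hKx φ hφ hsol t ht
  have hφ0 : φ 0 = x := by simpa using hsol 0 ⟨le_rfl, ht.1.trans ht.2⟩
  have norm_velocity_le : ∀ s ∈ Ico 0 T, ‖φ s‖ < ρ →
      ‖f (φ s) (K x)‖ ≤ L * ‖φ s‖ + M * ‖x‖ := fun s _ hs =>
    calc ‖f (φ s) (K x)‖ ≤ L * ‖φ s‖ + (‖(B ∘L K) x‖ + ε * ‖K x‖) := norm_f_le _ _ hs hKx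
      _ ≤ L * ‖φ s‖ + (‖B ∘L K‖ * ‖x‖ + ε * (‖K‖ * ‖x‖)) := by
        gcongr <;> exact ContinuousLinearMap.le_opNorm _ x
      _ = L * ‖φ s‖ + M * ‖x‖ := by ring
  calc ‖φ t‖ ≤ gronwallBound ‖x‖ L (M * ‖x‖) (t - 0) :=
        norm_le_gronwallBound_of_norm_deriv_right_le_of_norm_lt (by positivity) (by positivity) hφ
          (fun s => hasDerivWithinAt_Ici_of_eq_add_integral
            ((hfc (K x)).comp_continuousOn hφ) hsol)
          (by rw [hφ0]) norm_velocity_le (by rw [sub_zero]; exact (gronwall_le x).trans_lt hx)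
          t ht
    _ ≤ gronwallBound ‖x‖ L (M * ‖x‖) T :=
        gronwallBound_mono (by positivity) (by positivity) (by positivity) (by simpa using ht.2)
    _ ≤ (1 + T * M) * Real.exp (T * L) * ‖x‖ := gronwall_le x

end NormedSpace

section Matrix

variable {ι κ ν : Type*} [Fintype ι] [Fintype κ]

theorem mk_mulVecLin_mul (M : Matrix ν κ ℝ) (N : Matrix κ ι ℝ) :
    ContinuousLinearMap.mk (M * N).mulVecLin =
      ContinuousLinearMap.mk M.mulVecLin ∘L ContinuousLinearMap.mk N.mulVecLin :=
  ContinuousLinearMap.ext fun x => (Matrix.mulVec_mulVec x M N).symm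

theorem hasFDerivAt_uncurry_coprod_mulVecLin [Finite ν] {f : (ι → ℝ) → (κ → ℝ) → ν → ℝ}
    {x : ι → ℝ} {y : κ → ℝ} {A : Matrix ν ι ℝ} {B : Matrix ν κ ℝ}
    (hf : DifferentiableAt ℝ (Function.uncurry f) (x, y))
    (hA : ∀ v, A.mulVec v = fderiv ℝ (fun x' => f x' y) x v)
    (hB : ∀ w, B.mulVec w = fderiv ℝ (fun y' => f x y') y w) :
    HasFDerivAt (Function.uncurry f)
      ((ContinuousLinearMap.mk A.mulVecLin).coprod (.mk B.mulVecLin)) (x, y) := by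
  cases nonempty_fintype ν
  have hA' : ContinuousLinearMap.mk A.mulVecLin = fderiv ℝ (fun x' => f x' y) x :=
    ContinuousLinearMap.ext hA
  have hB' : ContinuousLinearMap.mk B.mulVecLin = fderiv ℝ (fun y' => f x y') y :=
    ContinuousLinearMap.ext hB
  rw [hA', hB']
  exact hasFDerivAt_uncurry_coprod_fderiv hf

end Matrix

/-- inter-sample bound. For the plant `ẋ = f(x,u)` with `f` continuously
differentiable, `f(0,0) = 0`, Jacobians `A`, `B` at the origin, feedback gain `K`,
sampling period `T` and `θ ∈ {0,1}`, there is `d > 0` such that any solution `φ` on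
`[0,T]` with constant input `ū = (1−θ)Kx̄` and initial state `‖x̄‖_∞ < d` satisfies
`‖φ(t)‖_∞ ≤ c₀‖x̄‖_∞` (if `θ = 0`) and `‖φ(t)‖_∞ ≤ c₁‖x̄‖_∞` (if `θ = 1`) for
`t ∈ [0,T)`, where `c₀ = (1 + T(‖BK‖_∞ + ‖K‖_∞))·e^{T(‖A‖_∞+1)}` and
`c₁ = e^{T(‖A‖_∞+1)}`. Vectors carry the `∞`-norm and matrices the induced
`∞`-operator norm. -/
theorem stmt0 (n m : ℕ) (hn : 0 < n) (hm : 0 < m)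
    (f : (Fin n → ℝ) → (Fin m → ℝ) → Fin n → ℝ)
    (hf : ContDiff ℝ 1 (Function.uncurry f))
    (hf0 : f 0 0 = 0)
    (A : Matrix (Fin n) (Fin n) ℝ) (B : Matrix (Fin n) (Fin m) ℝ)
    (hA : ∀ v : Fin n → ℝ, A.mulVec v = fderiv ℝ (fun x => f x 0) 0 v)
    (hB : ∀ w : Fin m → ℝ, B.mulVec w = fderiv ℝ (fun u => f 0 u) 0 w)
    (K : Matrix (Fin m) (Fin n) ℝ) (T : ℝ) (hT : 0 < T)
    (θ : ℝ) (hθ : θ = 0 ∨ θ = 1) :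
    ∃ d > 0, ∀ xBar : Fin n → ℝ, ‖xBar‖ < d →
      ∀ φ : ℝ → Fin n → ℝ, ContinuousOn φ (Set.Icc 0 T) →
        (∀ t ∈ Set.Icc (0 : ℝ) T,
          φ t = xBar + ∫ s in (0 : ℝ)..t, f (φ s) ((1 - θ) • K.mulVec xBar)) →
        ∀ t ∈ Set.Ico (0 : ℝ) T,
          (θ = 0 → ‖φ t‖ ≤
            (1 + T * (‖B * K‖ + ‖K‖)) * Real.exp (T * (‖A‖ + 1)) * ‖xBar‖) ∧
          (θ = 1 → ‖φ t‖ ≤ Real.exp (T * (‖A‖ + 1)) * ‖xBar‖) := by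
  have hfAB := hasFDerivAt_uncurry_coprod_mulVecLin (hf.differentiable one_ne_zero _) hA hB
  obtain ⟨d, hd, h⟩ := NormedAddGroup.nhds_zero_basis_norm_lt.eventually_iff.1
    (stmt0_general hfAB hf0 (fun u => hf.continuous.comp (.prodMk_left u))
      ((1 - θ) • .mk K.mulVecLin) T one_pos)
  refine ⟨d, hd, fun xBar hx φ hφ hsol t ht => ?_⟩
  have hbound := h hx φ hφ hsol t (Set.Ico_subset_Icc_self ht)
  simp only [Matrix.linfty_opNorm_eq_opNorm, mk_mulVecLin_mul]
  rcases hθ with rfl | rfl <;> simpa using hbound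
end

section
/- Let θ : ℕ → {0,1} with θ(0) = 0, let μ₀, μ₁ ≥ 1 and ω₀, ω₁ > 0, and let W : ℕ → ℝ be a nonnegative sequence such that for every k ∈ ℕ: W(k+1) ≤ ω_{θ(k)}·W(k) whenever θ(k+1) = θ(k), and W(k+1) ≤ μ_{θ(k)}·ω_{θ(k)}·W(k) whenever θ(k+1) ≠ θ(k). Then for every k ∈ ℕ, W(k) ≤ (μ₀μ₁)^{S(k)} · ω₀^{k−χ(k)} · ω₁^{χ(k)} · W(0), where χ(k) := #{j < k : θ(j) = 1} and S(k) := #{j < k : θ(j) = 0 and θ(j+1) = 1}. -/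
/-- `χ(k)`: the number of indices `j < k` with `θ j = 1` (packet-loss steps). -/
def lossCount (θ : ℕ → ℕ) (k : ℕ) : ℕ :=
  ((Finset.range k).filter fun j => θ j = 1).card

/-- `S(k)`: the number of indices `j < k` with `θ j = 0` and `θ (j+1) = 1`
(switches from the nominal mode to the packet-loss mode). -/
def switchCount (θ : ℕ → ℕ) (k : ℕ) : ℕ :=
  ((Finset.range k).filter fun j => θ j = 0 ∧ θ (j + 1) = 1).card

/-! Iterating the recursion bounds `W k` by the product of the one-step factors times `W 0`. Sorting
that product by mode and by direction of switching gives `μ₀ ^ S * μ₁ ^ T * ω₀ ^ (k - χ) * ω₁ ^ χ`,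
where `T` counts the switches from `1` to `0`. Switches in the two directions alternate, starting
with one from `0` to `1`, so `T ≤ S` and `μ₁ ^ T ≤ μ₁ ^ S`. -/

/-- `T(k)`: the number of indices `j < k` with `θ j = 1` and `θ (j+1) = 0` (switches from the
packet-loss mode back to the nominal mode), the counterpart of `switchCount`. -/
def recoveryCount (θ : ℕ → ℕ) (k : ℕ) : ℕ :=
  ((Finset.range k).filter fun j => θ j = 1 ∧ θ (j + 1) = 0).card

theorem add_switchCount_eq_add_recoveryCount {θ : ℕ → ℕ} (hθ : ∀ k, θ k = 0 ∨ θ k = 1) (k : ℕ) :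
    θ 0 + switchCount θ k = θ k + recoveryCount θ k := by
  simp only [switchCount, recoveryCount, Finset.card_filter]
  induction k with
  | zero => simp
  | succ k ih =>
    rw [Finset.sum_range_succ, Finset.sum_range_succ]
    have hk := hθ k
    have hk' := hθ (k + 1)
    split_ifs <;> omega

theorem recoveryCount_le_switchCount {θ : ℕ → ℕ} (hθ : ∀ k, θ k = 0 ∨ θ k = 1) (hθ0 : θ 0 = 0)
    (k : ℕ) : recoveryCount θ k ≤ switchCount θ k := by
  have := add_switchCount_eq_add_recoveryCount hθ k
  omega

theorem card_filter_ne_one_eq_sub_lossCount (θ : ℕ → ℕ) (k : ℕ) :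
    ((Finset.range k).filter fun j => ¬θ j = 1).card = k - lossCount θ k := by
  have h := Finset.card_filter_add_card_filter_not (s := Finset.range k) fun j => θ j = 1
  rw [Finset.card_range] at h
  exact Nat.eq_sub_of_add_eq' h

/-- The factor by which the recursion lets the sequence grow from step `k` to step `k + 1`: the rate
`ω` of the mode at step `k`, times the jump factor `μ` of that mode if the mode changes. -/
def stepGain {R : Type*} [Mul R] (θ : ℕ → ℕ) (μ₀ μ₁ ω₀ ω₁ : R) (k : ℕ) : R :=
  if θ (k + 1) = θ k then (if θ k = 0 then ω₀ else ω₁)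
  else (if θ k = 0 then μ₀ else μ₁) * (if θ k = 0 then ω₀ else ω₁)

section CommSemiring

variable {R : Type*} [CommSemiring R] {θ : ℕ → ℕ}

theorem stepGain_eq_mul (hθ : ∀ k, θ k = 0 ∨ θ k = 1) (μ₀ μ₁ ω₀ ω₁ : R) (k : ℕ) :
    stepGain θ μ₀ μ₁ ω₀ ω₁ k =
      (if θ k = 0 ∧ θ (k + 1) = 1 then μ₀ else 1) * (if θ k = 1 ∧ θ (k + 1) = 0 then μ₁ else 1) *
        (if θ k = 1 then ω₁ else ω₀) := by
  rcases hθ k with h | h <;> rcases hθ (k + 1) with h' | h' <;> simp [stepGain, h, h']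

theorem prod_range_stepGain (hθ : ∀ k, θ k = 0 ∨ θ k = 1) (μ₀ μ₁ ω₀ ω₁ : R) (k : ℕ) :
    ∏ j ∈ Finset.range k, stepGain θ μ₀ μ₁ ω₀ ω₁ j =
      μ₀ ^ switchCount θ k * μ₁ ^ recoveryCount θ k *
        (ω₀ ^ (k - lossCount θ k) * ω₁ ^ lossCount θ k) := by
  simp only [stepGain_eq_mul hθ, Finset.prod_mul_distrib, Finset.prod_ite, Finset.prod_const,
    one_pow, mul_one, card_filter_ne_one_eq_sub_lossCount]
  rw [mul_comm (ω₀ ^ _), switchCount, recoveryCount, lossCount]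

variable [PartialOrder R] [IsOrderedRing R] {μ₀ μ₁ ω₀ ω₁ : R}

theorem stepGain_nonneg (hμ₀ : 0 ≤ μ₀) (hμ₁ : 0 ≤ μ₁) (hω₀ : 0 ≤ ω₀) (hω₁ : 0 ≤ ω₁) (k : ℕ) :
    0 ≤ stepGain θ μ₀ μ₁ ω₀ ω₁ k := by
  unfold stepGain
  split_ifs <;> positivity

theorem le_prod_range_mul_of_succ_le_mul {c u : ℕ → R} (hc : ∀ k, 0 ≤ c k)
    (hu : ∀ k, u (k + 1) ≤ c k * u k) (k : ℕ) : u k ≤ (∏ j ∈ Finset.range k, c j) * u 0 := by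
  simpa [mul_comm] using
    discrete_gronwall_prod_general (b := 0) (fun n _ => by simpa using hu n) (fun n _ => hc n)
      k.zero_le

theorem le_pow_switchCount_mul_pow_recoveryCount_mul (hθ : ∀ k, θ k = 0 ∨ θ k = 1)
    (hμ₀ : 0 ≤ μ₀) (hμ₁ : 0 ≤ μ₁) (hω₀ : 0 ≤ ω₀) (hω₁ : 0 ≤ ω₁) {W : ℕ → R}
    (hW : ∀ k, W (k + 1) ≤ stepGain θ μ₀ μ₁ ω₀ ω₁ k * W k) (k : ℕ) :
    W k ≤ μ₀ ^ switchCount θ k * μ₁ ^ recoveryCount θ k *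
      (ω₀ ^ (k - lossCount θ k) * ω₁ ^ lossCount θ k) * W 0 := by
  rw [← prod_range_stepGain hθ]
  exact le_prod_range_mul_of_succ_le_mul (stepGain_nonneg hμ₀ hμ₁ hω₀ hω₁) hW k

theorem stmt2_general (hθ : ∀ k, θ k = 0 ∨ θ k = 1) (hθ0 : θ 0 = 0)
    (hμ₀ : 0 ≤ μ₀) (hμ₁ : 1 ≤ μ₁) (hω₀ : 0 ≤ ω₀) (hω₁ : 0 ≤ ω₁) {W : ℕ → R} (hW0 : 0 ≤ W 0)
    (hrec_same : ∀ k, θ (k + 1) = θ k →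
      W (k + 1) ≤ (if θ k = 0 then ω₀ else ω₁) * W k)
    (hrec_switch : ∀ k, θ (k + 1) ≠ θ k →
      W (k + 1) ≤ (if θ k = 0 then μ₀ else μ₁) * (if θ k = 0 then ω₀ else ω₁) * W k) (k : ℕ) :
    W k ≤ (μ₀ * μ₁) ^ switchCount θ k *
      ω₀ ^ (k - lossCount θ k) * ω₁ ^ lossCount θ k * W 0 := by
  have hstep (k : ℕ) : W (k + 1) ≤ stepGain θ μ₀ μ₁ ω₀ ω₁ k * W k := by
    by_cases hk : θ (k + 1) = θ k
    · simpa only [stepGain, if_pos hk] using hrec_same k hk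
    · simpa only [stepGain, if_neg hk] using hrec_switch k hk
  have hTS : recoveryCount θ k ≤ switchCount θ k := recoveryCount_le_switchCount hθ hθ0 k
  calc W k
    _ ≤ μ₀ ^ switchCount θ k * μ₁ ^ recoveryCount θ k *
          (ω₀ ^ (k - lossCount θ k) * ω₁ ^ lossCount θ k) * W 0 :=
        le_pow_switchCount_mul_pow_recoveryCount_mul hθ hμ₀ (zero_le_one.trans hμ₁) hω₀ hω₁ hstep k
    _ ≤ μ₀ ^ switchCount θ k * μ₁ ^ switchCount θ k *
          (ω₀ ^ (k - lossCount θ k) * ω₁ ^ lossCount θ k) * W 0 := by gcongr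
    _ = (μ₀ * μ₁) ^ switchCount θ k *
          ω₀ ^ (k - lossCount θ k) * ω₁ ^ lossCount θ k * W 0 := by rw [mul_pow, ← mul_assoc]

end CommSemiring

/-- growth bound for the switched Lyapunov-like sequence. -/
theorem stmt2 (θ : ℕ → ℕ) (hθ : ∀ k, θ k = 0 ∨ θ k = 1) (hθ0 : θ 0 = 0)
    (μ₀ μ₁ ω₀ ω₁ : ℝ) (hμ₀ : 1 ≤ μ₀) (hμ₁ : 1 ≤ μ₁) (hω₀ : 0 < ω₀) (hω₁ : 0 < ω₁)
    (W : ℕ → ℝ) (hWnonneg : ∀ k, 0 ≤ W k)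
    (hrec_same : ∀ k, θ (k + 1) = θ k →
      W (k + 1) ≤ (if θ k = 0 then ω₀ else ω₁) * W k)
    (hrec_switch : ∀ k, θ (k + 1) ≠ θ k →
      W (k + 1) ≤ (if θ k = 0 then μ₀ else μ₁) * (if θ k = 0 then ω₀ else ω₁) * W k) :
    ∀ k : ℕ, W k ≤ (μ₀ * μ₁) ^ switchCount θ k *
      ω₀ ^ (k - lossCount θ k) * ω₁ ^ lossCount θ k * W 0 := by
  exact stmt2_general hθ hθ0 (zero_le_one.trans hμ₀) hμ₁ hω₀.le hω₁.le (hWnonneg 0)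
    hrec_same hrec_switch
end

section
/- Let θ : ℕ → {0,1} with θ(0) = 0, let μ₀, μ₁ ≥ 1, 0 < ω₀ < 1 ≤ ω₁, T > 0, κ_F, ρ_F, κ*, ρ* ≥ 0, and 0 < α ≤ β, and let W : ℕ → ℝ and s : ℕ → ℝ be sequences with s(k) ≥ 0 and α·s(k)² ≤ W(k) ≤ β·s(k)² for all k. Suppose the recursion W(k+1) ≤ ω_{θ(k)}·W(k) (if θ(k+1) = θ(k)) and W(k+1) ≤ μ_{θ(k)}·ω_{θ(k)}·W(k) (if θ(k+1) ≠ θ(k)) holds for all k, and that S(k) ≤ κ_F + ρ_F·kT and χ(k) ≤ (κ* + ρ*·kT)/T for all k, where χ(k) := #{j < k : θ(j) = 1} and S(k) := #{j < k : θ(j) = 0 and θ(j+1) = 1}. If ω := (μ₀μ₁)^{ρ_F T}·ω₀^{1−ρ*}·ω₁^{ρ*} < 1 and c_W := (μ₀μ₁)^{κ_F}·(ω₁/ω₀)^{κ*/T}, then s(k) ≤ √(β·c_W/α)·ω^{k/2}·s(0) for all k, and in particular s(k) → 0 as k → ∞. -/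
/-! Weight the sequence `W` by `μ₁` in packet-loss mode and by `1` in nominal mode. A switch back
to nominal mode then costs nothing, because the factor `μ₁` it picks up was paid in advance at the
preceding switch into packet-loss mode; every switch `0 → 1` costs `μ₀ * μ₁`. Hence the weighted
sequence grows at most by `(μ₀ * μ₁) ^ S k * ω₀ ^ k * (ω₁ / ω₀) ^ χ k`, and the budgets for `S k`
and `χ k` turn this factor into a geometric one. -/

/-- The weight that turns `W` into a sequence charged only at switches `0 → 1`: the multiplier
`μ₁` of the next switch `1 → 0`, prepaid for as long as the mode is not `0`. -/
def modeWeight (μ₁ : ℝ) (mode : ℕ) : ℝ :=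
  if mode = 0 then 1 else μ₁

/-- The growth factor accumulated before step `k`, at cost `M` per switch `0 → 1`, `ω₁` per loss
step and `ω₀` per nominal step. The `k - χ k` nominal steps and the `χ k` loss steps are encoded as
`ω₀ ^ k * (ω₁ / ω₀) ^ χ k`, which avoids the truncated subtraction but requires `ω₀ ≠ 0`. -/
noncomputable def accumulatedGain (M ω₀ ω₁ : ℝ) (θ : ℕ → ℕ) (k : ℕ) : ℝ :=
  M ^ switchCount θ k * ω₀ ^ k * (ω₁ / ω₀) ^ lossCount θ k

/-- The paper's geometric rate `ω`, with `M` for the product `μ₀ * μ₁`. -/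
noncomputable def decayRate (M ω₀ ω₁ T ρF ρs : ℝ) : ℝ :=
  M ^ (ρF * T) * ω₀ ^ (1 - ρs) * ω₁ ^ ρs

/-- The paper's constant `c_W` in front of the geometric rate, with `M` for the product
`μ₀ * μ₁`. -/
noncomputable def transientGain (M ω₀ ω₁ T κF κs : ℝ) : ℝ :=
  M ^ κF * (ω₁ / ω₀) ^ (κs / T)

theorem pow_le_rpow_mul_rpow_pow {a c r : ℝ} {m k : ℕ} (ha : 1 ≤ a) (hm : (m : ℝ) ≤ c + r * k) :
    a ^ m ≤ a ^ c * (a ^ r) ^ k := by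
  have ha₀ : 0 < a := by linarith
  calc a ^ m = a ^ (m : ℝ) := (Real.rpow_natCast a m).symm
    _ ≤ a ^ (c + r * k) := Real.rpow_le_rpow_of_exponent_le ha hm
    _ = a ^ c * (a ^ r) ^ k := by rw [Real.rpow_add ha₀, Real.rpow_mul_natCast ha₀.le]

theorem le_sqrt_mul_rpow_half_mul {α β C q x y : ℝ} {k : ℕ} (hα : 0 < α) (hq : 0 ≤ q)
    (hy : 0 ≤ y) (h : α * x ^ 2 ≤ C * q ^ k * (β * y ^ 2)) :
    x ≤ √(β * C / α) * q ^ ((k : ℝ) / 2) * y := by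
  have hq_half : q ^ ((k : ℝ) / 2) = √(q ^ k) := by
    rw [Real.sqrt_eq_rpow, ← Real.rpow_natCast_mul hq, mul_one_div]
  have hx_sq : x ^ 2 ≤ β * C / α * q ^ k * y ^ 2 := by
    calc x ^ 2 ≤ C * q ^ k * (β * y ^ 2) / α := by rwa [le_div_iff₀' hα]
      _ = β * C / α * q ^ k * y ^ 2 := by ring
  calc x ≤ √(β * C / α * q ^ k * y ^ 2) := Real.le_sqrt_of_sq_le hx_sq
    _ = √(β * C / α) * q ^ ((k : ℝ) / 2) * y := by
      rw [Real.sqrt_mul' _ (sq_nonneg y), Real.sqrt_mul' _ (pow_nonneg hq k), Real.sqrt_sq hy,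
        hq_half]

theorem tendsto_rpow_natCast_half_atTop_nhds_zero {q : ℝ} (hq : 0 ≤ q) (hq₁ : q < 1) :
    Filter.Tendsto (fun k : ℕ => q ^ ((k : ℝ) / 2)) Filter.atTop (nhds 0) :=
  (tendsto_rpow_atTop_of_base_lt_one q (by linarith) hq₁).comp
    (tendsto_natCast_atTop_atTop.atTop_div_const two_pos)

theorem lossCount_succ (θ : ℕ → ℕ) (k : ℕ) :
    lossCount θ (k + 1) = lossCount θ k + if θ k = 1 then 1 else 0 := by
  simp only [lossCount, ← Nat.count_eq_card_filter_range, Nat.count_succ]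

theorem switchCount_succ (θ : ℕ → ℕ) (k : ℕ) :
    switchCount θ (k + 1) = switchCount θ k + if θ k = 0 ∧ θ (k + 1) = 1 then 1 else 0 := by
  simp only [switchCount, ← Nat.count_eq_card_filter_range, Nat.count_succ]

theorem one_le_modeWeight {μ₁ : ℝ} (hμ₁ : 1 ≤ μ₁) (mode : ℕ) : 1 ≤ modeWeight μ₁ mode := by
  unfold modeWeight
  split_ifs
  exacts [le_rfl, hμ₁]

section AccumulatedGain

variable {M ω₀ ω₁ : ℝ} {θ : ℕ → ℕ}

@[simp]
theorem accumulatedGain_zero : accumulatedGain M ω₀ ω₁ θ 0 = 1 := by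
  simp [accumulatedGain, switchCount, lossCount]

theorem accumulatedGain_succ (hω₀ : ω₀ ≠ 0) (k : ℕ) :
    accumulatedGain M ω₀ ω₁ θ (k + 1) =
      (if θ k = 0 ∧ θ (k + 1) = 1 then M else 1) * (if θ k = 1 then ω₁ else ω₀) *
        accumulatedGain M ω₀ ω₁ θ k := by
  simp only [accumulatedGain, switchCount_succ, lossCount_succ]
  split_ifs <;> simp only [pow_succ, add_zero] <;> field_simp

theorem decayRate_eq {T ρF ρs : ℝ} (hω₀ : 0 < ω₀) (hω₁ : 0 ≤ ω₁) :
    decayRate M ω₀ ω₁ T ρF ρs = M ^ (ρF * T) * ω₀ * (ω₁ / ω₀) ^ ρs := by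
  rw [decayRate, Real.rpow_sub hω₀, Real.div_rpow hω₁ hω₀.le, Real.rpow_one]
  ring

theorem accumulatedGain_le {T κF ρF κs ρs : ℝ} {k : ℕ} (hM : 1 ≤ M) (hω₀ : 0 < ω₀)
    (hω₀₁ : ω₀ ≤ ω₁) (hT : T ≠ 0) (hS : (switchCount θ k : ℝ) ≤ κF + ρF * (k * T))
    (hχ : (lossCount θ k : ℝ) ≤ (κs + ρs * (k * T)) / T) :
    accumulatedGain M ω₀ ω₁ θ k ≤
      transientGain M ω₀ ω₁ T κF κs * decayRate M ω₀ ω₁ T ρF ρs ^ k := by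
  have hω₁ : 0 < ω₁ := hω₀.trans_le hω₀₁
  have h_switch : M ^ switchCount θ k ≤ M ^ κF * (M ^ (ρF * T)) ^ k :=
    pow_le_rpow_mul_rpow_pow hM (hS.trans_eq (by ring))
  have h_loss : (ω₁ / ω₀) ^ lossCount θ k ≤ (ω₁ / ω₀) ^ (κs / T) * ((ω₁ / ω₀) ^ ρs) ^ k :=
    pow_le_rpow_mul_rpow_pow ((one_le_div₀ hω₀).2 hω₀₁) (hχ.trans_eq (by field_simp))
  calc accumulatedGain M ω₀ ω₁ θ k
      ≤ M ^ κF * (M ^ (ρF * T)) ^ k * ω₀ ^ k *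
          ((ω₁ / ω₀) ^ (κs / T) * ((ω₁ / ω₀) ^ ρs) ^ k) := by
        unfold accumulatedGain
        gcongr
    _ = transientGain M ω₀ ω₁ T κF κs * decayRate M ω₀ ω₁ T ρF ρs ^ k := by
        rw [decayRate_eq hω₀ hω₁.le, transientGain, mul_pow, mul_pow]
        ring

end AccumulatedGain

section SwitchedRecursion

variable {θ : ℕ → ℕ} {μ₀ μ₁ ω₀ ω₁ : ℝ} {W : ℕ → ℝ}

theorem modeWeight_mul_succ_le {k : ℕ} (hθ : ∀ k, θ k = 0 ∨ θ k = 1) (hμ₁ : 0 ≤ μ₁)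
    (hrec_same : θ (k + 1) = θ k → W (k + 1) ≤ (if θ k = 0 then ω₀ else ω₁) * W k)
    (hrec_switch : θ (k + 1) ≠ θ k →
      W (k + 1) ≤ (if θ k = 0 then μ₀ else μ₁) * (if θ k = 0 then ω₀ else ω₁) * W k) :
    modeWeight μ₁ (θ (k + 1)) * W (k + 1) ≤
      (if θ k = 0 ∧ θ (k + 1) = 1 then μ₀ * μ₁ else 1) * (if θ k = 1 then ω₁ else ω₀) *
        (modeWeight μ₁ (θ k) * W k) := by
  rcases hθ k with hk | hk <;> rcases hθ (k + 1) with hk_succ | hk_succ <;>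
    simp only [hk, hk_succ, modeWeight, reduceIte, and_self, and_true, and_false, zero_ne_one,
      one_ne_zero, ne_eq, not_true_eq_false, not_false_eq_true, forall_const, one_mul]
      at hrec_same hrec_switch ⊢
  · exact hrec_same
  · calc μ₁ * W (k + 1) ≤ μ₁ * (μ₀ * ω₀ * W k) := by gcongr
      _ = μ₀ * μ₁ * ω₀ * W k := by ring
  · exact hrec_switch.trans_eq (by ring)
  · calc μ₁ * W (k + 1) ≤ μ₁ * (ω₁ * W k) := by gcongr
      _ = ω₁ * (μ₁ * W k) := by ring

theorem modeWeight_mul_le_accumulatedGain_mul (hθ : ∀ k, θ k = 0 ∨ θ k = 1)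
    (hμ₀ : 0 ≤ μ₀) (hμ₁ : 0 ≤ μ₁) (hω₀ : 0 < ω₀) (hω₁ : 0 ≤ ω₁)
    (hrec_same : ∀ k, θ (k + 1) = θ k →
      W (k + 1) ≤ (if θ k = 0 then ω₀ else ω₁) * W k)
    (hrec_switch : ∀ k, θ (k + 1) ≠ θ k →
      W (k + 1) ≤ (if θ k = 0 then μ₀ else μ₁) * (if θ k = 0 then ω₀ else ω₁) * W k)
    (k : ℕ) :
    modeWeight μ₁ (θ k) * W k ≤
      accumulatedGain (μ₀ * μ₁) ω₀ ω₁ θ k * (modeWeight μ₁ (θ 0) * W 0) := by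
  induction k with
  | zero => rw [accumulatedGain_zero, one_mul]
  | succ k ih =>
    refine (modeWeight_mul_succ_le hθ hμ₁ (hrec_same k) (hrec_switch k)).trans ?_
    rw [accumulatedGain_succ hω₀.ne', mul_assoc _ (accumulatedGain _ _ _ _ _)]
    refine mul_le_mul_of_nonneg_left ih (mul_nonneg ?_ ?_) <;> split_ifs <;> positivity

end SwitchedRecursion

theorem stmt4_general {θ : ℕ → ℕ} (hθ : ∀ k, θ k = 0 ∨ θ k = 1)
    {μ₀ μ₁ ω₀ ω₁ T κF ρF κs ρs α β : ℝ}
    (hμ₀ : 1 ≤ μ₀) (hμ₁ : 1 ≤ μ₁) (hω₀ : 0 < ω₀) (hω₀₁ : ω₀ ≤ ω₁) (hT : 0 < T) (hα : 0 < α)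
    {W s : ℕ → ℝ} (hs : ∀ k, 0 ≤ s k)
    (hWlow : ∀ k, α * s k ^ 2 ≤ W k) (hWhigh : ∀ k, W k ≤ β * s k ^ 2)
    (hrec_same : ∀ k, θ (k + 1) = θ k →
      W (k + 1) ≤ (if θ k = 0 then ω₀ else ω₁) * W k)
    (hrec_switch : ∀ k, θ (k + 1) ≠ θ k →
      W (k + 1) ≤ (if θ k = 0 then μ₀ else μ₁) * (if θ k = 0 then ω₀ else ω₁) * W k)
    (hS : ∀ k : ℕ, (switchCount θ k : ℝ) ≤ κF + ρF * (k * T))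
    (hχ : ∀ k : ℕ, (lossCount θ k : ℝ) ≤ (κs + ρs * (k * T)) / T)
    (hω : decayRate (μ₀ * μ₁) ω₀ ω₁ T ρF ρs < 1) :
    (∀ k : ℕ, s k ≤
      √(β * (modeWeight μ₁ (θ 0) * transientGain (μ₀ * μ₁) ω₀ ω₁ T κF κs) / α) *
        decayRate (μ₀ * μ₁) ω₀ ω₁ T ρF ρs ^ ((k : ℝ) / 2) * s 0) ∧
    Filter.Tendsto s Filter.atTop (nhds 0) := by
  set q := decayRate (μ₀ * μ₁) ω₀ ω₁ T ρF ρs with hq_def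
  set c := transientGain (μ₀ * μ₁) ω₀ ω₁ T κF κs with hc_def
  have hω₁ : 0 < ω₁ := hω₀.trans_le hω₀₁
  have hq : 0 ≤ q := by rw [hq_def, decayRate]; positivity
  have hc : 0 ≤ c := by rw [hc_def, transientGain]; positivity
  have hW : ∀ k, 0 ≤ W k := fun k => (by positivity : 0 ≤ α * s k ^ 2).trans (hWlow k)
  have hweight : 0 ≤ modeWeight μ₁ (θ 0) := zero_le_one.trans (one_le_modeWeight hμ₁ _)
  have h_energy (k : ℕ) : α * s k ^ 2 ≤ modeWeight μ₁ (θ 0) * c * q ^ k * (β * s 0 ^ 2) :=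
    calc α * s k ^ 2 ≤ W k := hWlow k
      _ ≤ modeWeight μ₁ (θ k) * W k := le_mul_of_one_le_left (hW k) (one_le_modeWeight hμ₁ _)
      _ ≤ accumulatedGain (μ₀ * μ₁) ω₀ ω₁ θ k * (modeWeight μ₁ (θ 0) * W 0) :=
        modeWeight_mul_le_accumulatedGain_mul hθ (by positivity) (by positivity) hω₀ hω₁.le
          hrec_same hrec_switch k
      _ ≤ c * q ^ k * (modeWeight μ₁ (θ 0) * W 0) :=
        mul_le_mul_of_nonneg_right
          (accumulatedGain_le (one_le_mul_of_one_le_of_one_le hμ₀ hμ₁) hω₀ hω₀₁ hT.ne' (hS k)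
            (hχ k))
          (mul_nonneg hweight (hW 0))
      _ = modeWeight μ₁ (θ 0) * c * q ^ k * W 0 := by ring
      _ ≤ modeWeight μ₁ (θ 0) * c * q ^ k * (β * s 0 ^ 2) := by gcongr; exact hWhigh 0
  have h_bound (k : ℕ) := le_sqrt_mul_rpow_half_mul hα hq (hs 0) (h_energy k)
  refine ⟨h_bound, squeeze_zero hs h_bound ?_⟩
  simpa only [mul_zero, zero_mul] using
    ((tendsto_rpow_natCast_half_atTop_nhds_zero hq hω).const_mul _).mul_const (s 0)

/-- asymptotic stability estimate under DoS attacks: the state bound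
`s k` decays geometrically and tends to zero. -/
theorem stmt4 (θ : ℕ → ℕ) (hθ : ∀ k, θ k = 0 ∨ θ k = 1) (hθ0 : θ 0 = 0)
    (μ₀ μ₁ ω₀ ω₁ T κF ρF κs ρs α β : ℝ)
    (hμ₀ : 1 ≤ μ₀) (hμ₁ : 1 ≤ μ₁) (hω₀ : 0 < ω₀) (hω₀1 : ω₀ < 1) (hω₁ : 1 ≤ ω₁)
    (hT : 0 < T) (hκF : 0 ≤ κF) (hρF : 0 ≤ ρF) (hκs : 0 ≤ κs) (hρs : 0 ≤ ρs)
    (hα : 0 < α) (hαβ : α ≤ β)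
    (W s : ℕ → ℝ) (hs : ∀ k, 0 ≤ s k)
    (hWlow : ∀ k, α * s k ^ 2 ≤ W k) (hWhigh : ∀ k, W k ≤ β * s k ^ 2)
    (hrec_same : ∀ k, θ (k + 1) = θ k →
      W (k + 1) ≤ (if θ k = 0 then ω₀ else ω₁) * W k)
    (hrec_switch : ∀ k, θ (k + 1) ≠ θ k →
      W (k + 1) ≤ (if θ k = 0 then μ₀ else μ₁) * (if θ k = 0 then ω₀ else ω₁) * W k)
    (hS : ∀ k : ℕ, (switchCount θ k : ℝ) ≤ κF + ρF * (k * T))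
    (hχ : ∀ k : ℕ, (lossCount θ k : ℝ) ≤ (κs + ρs * (k * T)) / T)
    (hω : (μ₀ * μ₁) ^ (ρF * T) * ω₀ ^ (1 - ρs) * ω₁ ^ ρs < 1) :
    (∀ k : ℕ, s k ≤
      Real.sqrt (β * ((μ₀ * μ₁) ^ κF * (ω₁ / ω₀) ^ (κs / T)) / α) *
        ((μ₀ * μ₁) ^ (ρF * T) * ω₀ ^ (1 - ρs) * ω₁ ^ ρs) ^ ((k : ℝ) / 2) * s 0) ∧
    Filter.Tendsto s Filter.atTop (nhds 0) := by
  simpa only [hθ0, modeWeight, transientGain, decayRate, reduceIte, one_mul] using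
    stmt4_general hθ hμ₀ hμ₁ hω₀ (hω₀1.le.trans hω₁) hT hα hs hWlow hWhigh hrec_same hrec_switch
      hS hχ hω
end

section
/- Let (a_i)_{i∈ℕ} and (τ_i)_{i∈ℕ} be sequences of nonnegative reals, and for t ≥ 0 define A(t) := (⋃_{i∈ℕ} [a_i, a_i + τ_i]) ∩ [0,t] and N(t) := #{i ∈ ℕ : a_i ≤ t} (assumed finite for every t). Let T > 0 and let κ_F, ρ_F, κ_D, ρ_D ≥ 0 be constants such that N(t) ≤ κ_F + ρ_F·t and |A(t)| ≤ κ_D + ρ_D·t for all t ≥ 0, where |A(t)| denotes the Lebesgue measure of A(t). Then for every t ≥ 0, the number of indices k ∈ ℕ with kT ∈ A(t) is at most (κ_D + κ_F·T + (ρ_D + ρ_F·T)·t)/T. -/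
open MeasureTheory

/-!
Sampling instants hit by an attack are of two kinds. If the whole period `(kT - T, kT]` preceding
the instant lies in `A(t)`, it is charged to the attack duration: such periods are disjoint and have
length `T`. Otherwise the attack covering `kT`, cut off at time `0`, began less than `T` before
`kT`, and the instant is charged to the attack count: an attack is charged at most once, because two
instants are at least `T` apart.
-/

section SpacedInstants

variable {ι κ : Type*} {s : κ → ℝ} {T : ℝ}

theorem disjoint_Ioc_sub_of_le_dist {x y : ℝ} (h : T ≤ dist x y) :
    Disjoint (Set.Ioc (x - T) x) (Set.Ioc (y - T) y) := by
  rw [Set.Ioc_disjoint_Ioc]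
  rw [Real.dist_eq] at h
  grind

theorem card_mul_le_measureReal_of_Ioc_subset (hs : Pairwise fun k l ↦ T ≤ dist (s k) (s l))
    {F : Finset κ} {A : Set ℝ} (hA : volume A ≠ ⊤)
    (hF : ∀ k ∈ F, Set.Ioc (s k - T) (s k) ⊆ A) :
    F.card * T ≤ volume.real A :=
  calc
    F.card * T = ∑ _k ∈ F, T := by rw [Finset.sum_const, nsmul_eq_mul]
    _ ≤ ∑ k ∈ F, volume.real (Set.Ioc (s k - T) (s k)) := by
      gcongr with k
      rw [Real.volume_real_Ioc, sub_sub_cancel]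
      exact le_max_left T 0
    _ = volume.real (⋃ k ∈ F, Set.Ioc (s k - T) (s k)) :=
      (measureReal_biUnion_finset (fun _ _ _ _ hkl ↦ disjoint_Ioc_sub_of_le_dist (hs hkl))
        (fun _ _ ↦ measurableSet_Ioc) fun _ _ ↦ measure_Ioc_lt_top.ne).symm
    _ ≤ volume.real A := measureReal_mono (Set.iUnion₂_subset hF) hA

theorem finite_setOf_mem_Icc_of_le_dist (hT : 0 < T)
    (hs : Pairwise fun k l ↦ T ≤ dist (s k) (s l)) (u t : ℝ) :
    {k | s k ∈ Set.Icc u t}.Finite := by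
  by_contra hinf
  have hwindow : volume (Set.Icc (u - T) t) ≠ ⊤ := measure_Icc_lt_top.ne
  obtain ⟨n, hn⟩ := exists_nat_gt (volume.real (Set.Icc (u - T) t) / T)
  obtain ⟨F, hFS, rfl⟩ := Set.Infinite.exists_subset_card_eq hinf n
  have hF : ∀ k ∈ F, Set.Ioc (s k - T) (s k) ⊆ Set.Icc (u - T) t := fun k hk ↦
    Set.Ioc_subset_Icc_self.trans
      (Set.Icc_subset_Icc (sub_le_sub_right (hFS hk).1 T) (hFS hk).2)
  exact ((div_lt_iff₀ hT).1 hn).not_ge (card_mul_le_measureReal_of_Ioc_subset hs hwindow hF)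

theorem card_le_card_of_exists_mem_Ico (hs : Pairwise fun k l ↦ T ≤ dist (s k) (s l))
    {F : Finset κ} {I : Finset ι} (c : ι → ℝ)
    (hF : ∀ k ∈ F, ∃ i ∈ I, s k ∈ Set.Ico (c i) (c i + T)) :
    F.card ≤ I.card := by
  refine Finset.card_le_card_of_forall_subsingleton
    (fun k i ↦ s k ∈ Set.Ico (c i) (c i + T)) hF fun i _ k hk l hl ↦ ?_
  by_contra hkl
  have hdist : dist (s k) (s l) < T := by
    rw [Real.dist_eq, abs_sub_lt_iff]
    constructor <;> linarith [hk.2.1, hk.2.2, hl.2.1, hl.2.2]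
  exact hdist.not_ge (hs hkl)

/- The cutoff `max (a i) u` makes the first instants of the window, whose preceding period reaches
back before `u`, fall under the first alternative. -/
theorem exists_mem_Ico_or_Ioc_subset {a b : ι → ℝ} {u t x : ℝ} (T : ℝ)
    (hx : x ∈ (⋃ i, Set.Icc (a i) (b i)) ∩ Set.Icc u t) :
    (∃ i, a i ≤ t ∧ x ∈ Set.Ico (max (a i) u) (max (a i) u + T)) ∨
      Set.Ioc (x - T) x ⊆ (⋃ i, Set.Icc (a i) (b i)) ∩ Set.Icc u t := by
  obtain ⟨hcover, hux, hxt⟩ := hx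
  obtain ⟨i, hax, hxb⟩ := Set.mem_iUnion.1 hcover
  rcases lt_or_ge x (max (a i) u + T) with hrecent | hold
  · exact .inl ⟨i, hax.trans hxt, max_le hax hux, hrecent⟩
  · have hstart : max (a i) u ≤ x - T := le_sub_right_of_add_le hold
    refine .inr fun y hy ↦ ⟨Set.mem_iUnion.2 ⟨i, ?_, hy.2.trans hxb⟩, ?_, hy.2.trans hxt⟩
    · exact (le_max_left _ _).trans (hstart.trans hy.1.le)
    · exact (le_max_right _ _).trans (hstart.trans hy.1.le)

theorem pairwise_le_dist_natCast_mul (hT : 0 ≤ T) :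
    Pairwise fun k l : ℕ ↦ T ≤ dist (k * T) (l * T) := fun k l hkl ↦
  calc
    T ≤ dist k l * T := le_mul_of_one_le_left hT (Nat.pairwise_one_le_dist hkl)
    _ = dist (k * T) (l * T) := by
      rw [Nat.dist_eq, Real.dist_eq, ← sub_mul, abs_mul, abs_of_nonneg hT]

end SpacedInstants

theorem stmt8_general {ι κ : Type*} (a b : ι → ℝ) (s : κ → ℝ) {T : ℝ} (hT : 0 < T)
    (hs : Pairwise fun k l ↦ T ≤ dist (s k) (s l)) (u : ℝ) {t : ℝ}
    (hfin : {i | a i ≤ t}.Finite) :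
    ({k | s k ∈ (⋃ i, Set.Icc (a i) (b i)) ∩ Set.Icc u t}.ncard : ℝ) ≤
      (volume.real ((⋃ i, Set.Icc (a i) (b i)) ∩ Set.Icc u t) + {i | a i ≤ t}.ncard * T) / T := by
  classical
  set A := (⋃ i, Set.Icc (a i) (b i)) ∩ Set.Icc u t
  have hA : volume A ≠ ⊤ := measure_ne_top_of_subset Set.inter_subset_right measure_Icc_lt_top.ne
  have hS : {k | s k ∈ A}.Finite :=
    (finite_setOf_mem_Icc_of_le_dist hT hs u t).subset fun _ hk ↦ hk.2
  let covered := hS.toFinset.filter fun k ↦ Set.Ioc (s k - T) (s k) ⊆ A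
  let uncovered := hS.toFinset.filter fun k ↦ ¬ Set.Ioc (s k - T) (s k) ⊆ A
  have hcovered : covered.card * T ≤ volume.real A :=
    card_mul_le_measureReal_of_Ioc_subset hs hA fun _ hk ↦ (Finset.mem_filter.1 hk).2
  have huncovered : uncovered.card ≤ hfin.toFinset.card := by
    refine card_le_card_of_exists_mem_Ico hs (fun i ↦ max (a i) u) fun k hk ↦ ?_
    obtain ⟨hkS, hk⟩ := Finset.mem_filter.1 hk
    simpa only [hfin.mem_toFinset, Set.mem_ofPred_eq] using
      (exists_mem_Ico_or_Ioc_subset T (hS.mem_toFinset.1 hkS)).resolve_right hk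
  rw [le_div_iff₀ hT, Set.ncard_eq_toFinset_card _ hS, Set.ncard_eq_toFinset_card _ hfin,
    ← Finset.card_filter_add_card_filter_not fun k ↦ Set.Ioc (s k - T) (s k) ⊆ A,
    Nat.cast_add, add_mul]
  gcongr

/-- bound on the number of sampling times `kT` that fall inside the
DoS-attack set `A(t) = (⋃ i, [aᵢ, aᵢ + τᵢ]) ∩ [0, t]`, under the DoS frequency
assumption `N(t) ≤ κ_F + ρ_F t` and the DoS duration assumption
`|A(t)| ≤ κ_D + ρ_D t`. -/
theorem stmt8 (a τ : ℕ → ℝ) (ha : ∀ i, 0 ≤ a i) (hτ : ∀ i, 0 ≤ τ i)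
    (T : ℝ) (hT : 0 < T) (κF ρF κD ρD : ℝ)
    (hκF : 0 ≤ κF) (hρF : 0 ≤ ρF) (hκD : 0 ≤ κD) (hρD : 0 ≤ ρD)
    (hfin : ∀ t : ℝ, {i : ℕ | a i ≤ t}.Finite)
    (hfreq : ∀ t : ℝ, 0 ≤ t → ({i : ℕ | a i ≤ t}.ncard : ℝ) ≤ κF + ρF * t)
    (hdur : ∀ t : ℝ, 0 ≤ t →
      (volume ((⋃ i : ℕ, Set.Icc (a i) (a i + τ i)) ∩ Set.Icc 0 t)).toReal
        ≤ κD + ρD * t) :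
    ∀ t : ℝ, 0 ≤ t →
      ({k : ℕ | (k : ℝ) * T ∈ (⋃ i : ℕ, Set.Icc (a i) (a i + τ i)) ∩ Set.Icc 0 t}.ncard : ℝ)
        ≤ (κD + κF * T + (ρD + ρF * T) * t) / T := by
  intro t ht
  refine (stmt8_general a _ _ hT (pairwise_le_dist_natCast_mul hT.le) 0 (hfin t)).trans ?_
  rw [measureReal_def]
  gcongr ?_ / T
  linarith [hdur t ht, mul_le_mul_of_nonneg_right (hfreq t ht) hT.le]
end
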